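/- arXiv:2209.08658 — 2 statements merged into one kernel-verified Lean document; each statement's English description precedes it below -/
import Mathlib

section
/- Let C be an abelian category with Ext groups, and let ω, S be classes of objects such that ω is closed under extensions and isomorphisms and ω∩S is an ω-projective relative generator in ω. If ω is closed under direct summands, then ω^∧ is closed under direct summands. -/
/-!
The proof is by induction on the length `n` of a resolution: a direct summand `Y` of an object
`X` with an `ω`-resolution of length `n` has an `ω`-resolution of length `n` as well. For `n = 0`
this is the hypothesis on `ω`.

For `n + 1`, the relative generator allows the first term of the resolution of `X` to be replaced
by an object of `ω ∩ S` (`HasResLength.exists_generator_cover`): there is an exact sequence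
`0 → K → F → X → 0` with `F ∈ ω ∩ S` and `K` of length `n`. By dimension shifting `Ext¹(F, K) = 0`
(`ext_vanish_resolution`), so the idempotent `X → Y → X` lifts along `p : F → X` to an endomorphism
`φ` of `F`. Let `K'` be the kernel of `F → X → Y`. The restriction of `φ` to `K'` has values in
`K`, and `1 - φ` has values in `K'`; since `1 = φ + (1 - φ)`, the identity of `K'` factors through
`K ⊕ F` (`kernel_summand`). As `K ⊕ F` has length `n` by `HasResLength.extension`, so does its
summand `K'` by induction, and `0 → K' → F → Y → 0` is the first step of a resolution of `Y`.
-/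

open CategoryTheory

universe w v u

variable {C : Type u} [Category.{v} C] [Abelian C]

/-- `IsSES A B X` : there is a short exact sequence `0 → A → B → X → 0` in `C`. -/
def IsSES (A B X : C) : Prop :=
  ∃ (f : A ⟶ B) (g : B ⟶ X) (zero : f ≫ g = 0),
    (ShortComplex.mk f g zero).ShortExact

/-- `P` is closed under extensions. -/
def ClosedUnderExtensions (P : C → Prop) : Prop :=
  ∀ ⦃A B X : C⦄, IsSES A B X → P A → P X → P B

/-- `P` is closed under cones. -/
def ClosedUnderCones (P : C → Prop) : Prop :=
  ∀ ⦃A B X : C⦄, IsSES A B X → P A → P B → P X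

/-- `P` is closed under cocones. -/
def ClosedUnderCocones (P : C → Prop) : Prop :=
  ∀ ⦃A B X : C⦄, IsSES A B X → P B → P X → P A

/-- `P` is closed under isomorphisms. -/
def ClosedUnderIsos (P : C → Prop) : Prop :=
  ∀ ⦃X Y : C⦄, (X ≅ Y) → P X → P Y

/-- `P` is closed under direct summands. -/
def ClosedUnderSummands (P : C → Prop) : Prop :=
  ∀ ⦃X Y : C⦄, P X → (∃ (i : Y ⟶ X) (r : X ⟶ Y), i ≫ r = 𝟙 Y) → P Y

/-- `HasResLength P n M` : there is an exact sequence `0 → W_n → ⋯ → W_0 → M → 0`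
with all `W_i` in `P`. -/
inductive HasResLength (P : C → Prop) : ℕ → C → Prop
  | of_iso {M W : C} (hW : P W) (e : M ≅ W) : HasResLength P 0 M
  | step {K W M : C} {n : ℕ} (hW : P W) (h : IsSES K W M)
      (hK : HasResLength P n K) : HasResLength P (n + 1) M

/-- `P^∧` : the class of objects admitting a finite `P`-resolution. -/
def ResClass (P : C → Prop) : C → Prop := fun M => ∃ n, HasResLength P n M

/-- The resolution dimension `resdim_P(M) ∈ ℕ∞`. -/
noncomputable def resDim (P : C → Prop) (M : C) : ℕ∞ :=
  sInf {n : ℕ∞ | ∃ m : ℕ, n = (m : ℕ∞) ∧ HasResLength P m M}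

/-- `HasCoresLength P n M` : there is an exact sequence `0 → M → W_0 → ⋯ → W_n → 0`
with all `W_i` in `P`. -/
inductive HasCoresLength (P : C → Prop) : ℕ → C → Prop
  | of_iso {M W : C} (hW : P W) (e : M ≅ W) : HasCoresLength P 0 M
  | step {M W K : C} {n : ℕ} (hW : P W) (h : IsSES M W K)
      (hK : HasCoresLength P n K) : HasCoresLength P (n + 1) M

/-- `ω ∩ S` is a relative generator in `ω` : every `W ∈ ω` fits in a short exact
sequence `0 → W' → F → W → 0` with `F ∈ ω ∩ S` and `W' ∈ ω`. -/
def RelGenerator (ω S : C → Prop) : Prop :=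
  ∀ ⦃W : C⦄, ω W → ∃ (W' F : C), ω W' ∧ (ω F ∧ S F) ∧ IsSES W' F W

/-- `P` is left thick : closed under extensions, direct summands and cocones. -/
def LeftThick (P : C → Prop) : Prop :=
  ClosedUnderExtensions P ∧ ClosedUnderSummands P ∧ ClosedUnderCocones P

/-- `P` is right thick : closed under extensions, direct summands and cones. -/
def RightThick (P : C → Prop) : Prop :=
  ClosedUnderExtensions P ∧ ClosedUnderSummands P ∧ ClosedUnderCones P

/-- The smallest thick class (closed under extensions, direct summands, cones and
cocones) containing `P`. -/
inductive ThickClosure (P : C → Prop) : C → Prop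
  | of {M : C} (h : P M) : ThickClosure P M
  | ext {A B X : C} (h : IsSES A B X) (hA : ThickClosure P A) (hX : ThickClosure P X) :
      ThickClosure P B
  | cone {A B X : C} (h : IsSES A B X) (hA : ThickClosure P A) (hB : ThickClosure P B) :
      ThickClosure P X
  | cocone {A B X : C} (h : IsSES A B X) (hB : ThickClosure P B) (hX : ThickClosure P X) :
      ThickClosure P A
  | summand {X Y : C} (hX : ThickClosure P X) (i : Y ⟶ X) (r : X ⟶ Y) (hir : i ≫ r = 𝟙 Y) :
      ThickClosure P Y

section WithExt

variable [HasExt.{w} C]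

/-- `Ext^i(A, B) = 0` for all `A ∈ P`, `B ∈ Q` and all `i ≥ 1`. -/
def ExtVanish (P Q : C → Prop) : Prop :=
  ∀ ⦃A B : C⦄, P A → Q B → ∀ i : ℕ, 1 ≤ i → Subsingleton (Abelian.Ext A B i)

/-- `(X, ω)` is a left Frobenius pair in `C`. -/
def IsLeftFrobenius (X ω : C → Prop) : Prop :=
  LeftThick X ∧ (∀ ⦃W : C⦄, ω W → X W) ∧ ClosedUnderSummands ω ∧
    ExtVanish X ω ∧
    (∀ ⦃A : C⦄, X A → ∃ (W A' : C), ω W ∧ X A' ∧ IsSES A W A')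

/-- `(X, ω)` is a left Frobenius pair cut on `S`. -/
def IsLeftFrobeniusCut (X ω S : C → Prop) : Prop :=
  LeftThick X ∧
  IsLeftFrobenius (fun M => X M ∧ S M) (fun M => ω M ∧ S M) ∧
  (ExtVanish (fun M => ω M ∧ S M) ω ∧ RelGenerator ω S) ∧
  (ClosedUnderExtensions ω ∧ ClosedUnderSummands ω)

/-- `(A, B)` is a left weak AB context cut on `S`. -/
def IsLeftWeakABCut (A B S : C → Prop) : Prop :=
  IsLeftFrobeniusCut A (fun M => A M ∧ B M) S ∧
  RightThick (fun M => B M ∧ S M) ∧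
  (∀ ⦃M : C⦄, B M → S M → ResClass (fun N => A N ∧ S N) M)

/-- `(U, V)` is a left 1-cotorsion pair cut on `T`. -/
def IsLeft1CotorsionCut (U V T : C → Prop) : Prop :=
  ClosedUnderSummands U ∧
  (∀ ⦃A B : C⦄, U A → T A → V B → Subsingleton (Abelian.Ext A B 1)) ∧
  (∀ ⦃t : C⦄, T t → ∃ (K A : C), U A ∧ (∃ V' : C, V V' ∧ Nonempty (K ≅ V')) ∧ IsSES K A t)

/-- `(U, V)` is a right 1-cotorsion pair cut on `T`. -/
def IsRight1CotorsionCut (U V T : C → Prop) : Prop :=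
  ClosedUnderSummands V ∧
  (∀ ⦃A B : C⦄, U A → V B → T B → Subsingleton (Abelian.Ext A B 1)) ∧
  (∀ ⦃t : C⦄, T t → ∃ (B W : C), V B ∧ (∃ U' : C, U U' ∧ Nonempty (W ≅ U')) ∧ IsSES t B W)

/-- `(U, V)` is a 1-cotorsion pair cut on `T`. -/
def Is1CotorsionCut (U V T : C → Prop) : Prop :=
  IsLeft1CotorsionCut U V T ∧ IsRight1CotorsionCut U V T

/-- `(A, B)` is a left `n`-cotorsion pair cut on `S`. -/
def IsLeftNCotorsionCut (n : ℕ) (A B S : C → Prop) : Prop :=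
  ClosedUnderSummands A ∧
  (∀ ⦃X Y : C⦄, A X → S X → B Y → ∀ i : ℕ, 1 ≤ i → i ≤ n → Subsingleton (Abelian.Ext X Y i)) ∧
  (∀ ⦃s : C⦄, S s → ∃ (K X : C), A X ∧ (∃ m : ℕ, m ≤ n - 1 ∧ HasResLength B m K) ∧ IsSES K X s)

/-- `(A, B)` is a right `n`-cotorsion pair cut on `S`. -/
def IsRightNCotorsionCut (n : ℕ) (A B S : C → Prop) : Prop :=
  ClosedUnderSummands B ∧
  (∀ ⦃X Y : C⦄, A X → B Y → S Y → ∀ i : ℕ, 1 ≤ i → i ≤ n → Subsingleton (Abelian.Ext X Y i)) ∧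
  (∀ ⦃s : C⦄, S s → ∃ (Y W : C), B Y ∧ (∃ m : ℕ, m ≤ n - 1 ∧ HasCoresLength A m W) ∧ IsSES s Y W)

/-- `(F, G)` is a complete cotorsion pair in `T`. -/
def IsCompleteCotorsionPairIn (T F G : C → Prop) : Prop :=
  (∀ ⦃M : C⦄, F M → T M) ∧ (∀ ⦃M : C⦄, G M → T M) ∧
  ClosedUnderSummands F ∧ ClosedUnderSummands G ∧
  (∀ ⦃A B : C⦄, F A → G B → Subsingleton (Abelian.Ext A B 1)) ∧
  (∀ ⦃M : C⦄, T M →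
    (∃ G₁ F₁ : C, G G₁ ∧ F F₁ ∧ IsSES G₁ F₁ M) ∧
    (∃ G₂ F₂ : C, G G₂ ∧ F F₂ ∧ IsSES M G₂ F₂))

end WithExt

open Limits

lemma shortExact_of_lift {A B X : C} (f : A ⟶ B) (g : B ⟶ X) (w : f ≫ g = 0) [Mono f] [Epi g]
    (hl : ∀ {T : C} (k : T ⟶ B), k ≫ g = 0 → ∃ l : T ⟶ A, l ≫ f = k) :
    (ShortComplex.mk f g w).ShortExact where
  exact := ShortComplex.exact_of_f_is_kernel _
    (KernelFork.IsLimit.ofι' f w (fun k hk => ⟨(hl k hk).choose, (hl k hk).choose_spec⟩))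
  mono_f := by assumption
  epi_g := by assumption

lemma isSES_kernel {B X : C} (g : B ⟶ X) [Epi g] : IsSES (kernel g) B X :=
  ⟨kernel.ι g, g, kernel.condition g,
    shortExact_of_lift _ _ _ (fun k hk => ⟨kernel.lift g k hk, kernel.lift_ι g k hk⟩)⟩

/-- The pullback of a short exact sequence along an arbitrary morphism is short exact. -/
lemma isSES_of_isPullback {A B X V E : C} {f : A ⟶ B} {g : B ⟶ X} {w : f ≫ g = 0}
    (hS : (ShortComplex.mk f g w).ShortExact) {p : E ⟶ B} {q : E ⟶ V} {h : V ⟶ X}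
    (sq : IsPullback p q g h) : IsSES A E V := by
  have := hS.mono_f
  have := hS.epi_g
  dsimp at *
  have : Epi q := Abelian.epi_snd_of_isLimit _ _ sq.isLimit
  let a : A ⟶ E := sq.lift f 0 (by simp [w])
  have ha : a ≫ p = f := sq.lift_fst _ _ _
  have ha' : a ≫ q = 0 := sq.lift_snd _ _ _
  have : Mono (a ≫ p) := by rw [ha]; infer_instance
  have : Mono a := mono_of_mono a p
  refine ⟨a, q, ha', shortExact_of_lift _ _ _ (fun k hk => ?_)⟩
  obtain ⟨l, hl⟩ := hS.exact.lift' (k ≫ p) (by simp [sq.w, reassoc_of% hk])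
  refine ⟨l, sq.hom_ext ?_ ?_⟩
  · simpa [ha] using hl
  · simp [ha', hk]

/-- The kernel of a composite of epimorphisms `F ⟶ W ⟶ M` is an extension of the kernel of
`W ⟶ M` by the kernel of `F ⟶ W`. -/
lemma isSES_comp {W' F W K M : C} (h₁ : IsSES W' F W) (h₂ : IsSES K W M) :
    ∃ E : C, IsSES W' E K ∧ IsSES E F M := by
  obtain ⟨f, g, w, hS⟩ := h₁
  obtain ⟨f', g', w', hS'⟩ := h₂
  refine ⟨pullback g f', isSES_of_isPullback hS (IsPullback.of_hasPullback g f'), ?_⟩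
  have := hS.epi_g
  have := hS'.epi_g
  have := hS'.mono_f
  dsimp at *
  refine ⟨pullback.fst g f', g ≫ g', by rw [pullback.condition_assoc, w', comp_zero],
    shortExact_of_lift _ _ _ (fun k hk => ?_)⟩
  obtain ⟨l, hl⟩ := hS'.exact.lift' (k ≫ g) (by simpa using hk)
  exact ⟨pullback.lift k l hl.symm, pullback.lift_fst _ _ _⟩

lemma isSES_biprod (A B : C) : IsSES B (A ⊞ B) A :=
  ⟨biprod.inr, biprod.fst, biprod.inr_fst,
    shortExact_of_lift _ _ _ (fun k hk => ⟨k ≫ biprod.snd, by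
      apply biprod.hom_ext <;> simp [hk]⟩)⟩

/-- An extension of an object with a resolution of length `n` by an object of `ω` has a
resolution of length `n`: the extension pulls back along the first map of the resolution. -/
lemma HasResLength.extension {ω : C → Prop} (hext : ClosedUnderExtensions ω)
    (hiso : ClosedUnderIsos ω) {n : ℕ} {W E M : C} (hM : HasResLength ω n M)
    (hW : ω W) (h : IsSES W E M) : HasResLength ω n E := by
  cases hM with
  | of_iso hW' e => exact .of_iso (hext h hW (hiso e.symm hW')) (Iso.refl _)
  | step hW₀ h' hK =>
    obtain ⟨f, g, w, hS⟩ := h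
    obtain ⟨f', g', w', hS'⟩ := h'
    have sq := IsPullback.of_hasPullback g g'
    exact .step (hext (isSES_of_isPullback hS sq) hW hW₀) (isSES_of_isPullback hS' sq.flip) hK

/-- A resolution of positive length can be chosen to start with an object of `ω ∩ S`. -/
lemma HasResLength.exists_generator_cover {ω S : C → Prop} (hext : ClosedUnderExtensions ω)
    (hiso : ClosedUnderIsos ω) (hgen : RelGenerator ω S) {n : ℕ} {M : C}
    (hM : HasResLength ω (n + 1) M) :
    ∃ K F : C, (ω F ∧ S F) ∧ IsSES K F M ∧ HasResLength ω n K := by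
  cases hM with
  | step hW h hK =>
    obtain ⟨W', F, hW', hF, h'⟩ := hgen hW
    obtain ⟨E, h₁, h₂⟩ := isSES_comp h' h
    exact ⟨E, F, hF, h₂, hK.extension hext hiso hW' h₁⟩

/-- Dimension shifting: if `Ext^i(F, -)` vanishes on `ω` for all `i ≥ 1`, then it also vanishes on
objects with a finite `ω`-resolution. -/
lemma ext_vanish_resolution [HasExt.{w} C] {ω : C → Prop} (hiso : ClosedUnderIsos ω) {F : C}
    (hF : ∀ ⦃W : C⦄, ω W → ∀ i : ℕ, 1 ≤ i → Subsingleton (Abelian.Ext F W i))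
    {n : ℕ} {M : C} (hM : HasResLength ω n M) (i : ℕ) (hi : 1 ≤ i) :
    Subsingleton (Abelian.Ext F M i) := by
  induction hM generalizing i with
  | of_iso hW e => exact hF (hiso e.symm hW) i hi
  | step hW h hK ih =>
    obtain ⟨f, g, w, hS⟩ := h
    have := ih (i + 1) (by omega)
    have := hF hW i hi
    refine subsingleton_of_forall_eq 0 (fun x => ?_)
    obtain ⟨y, hy⟩ := Abelian.Ext.covariant_sequence_exact₃ F hS x rfl (Subsingleton.elim _ _)
    rw [← hy, Subsingleton.elim y 0, Abelian.Ext.zero_comp]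

lemma exists_lift_of_ext_one [HasExt.{w} C] {F A B X : C} {f : A ⟶ B} {g : B ⟶ X}
    {w : f ≫ g = 0} (hS : (ShortComplex.mk f g w).ShortExact)
    (hF : Subsingleton (Abelian.Ext F A 1)) (t : F ⟶ X) : ∃ l : F ⟶ B, l ≫ g = t := by
  obtain ⟨y, hy⟩ := Abelian.Ext.covariant_sequence_exact₃ F hS (Abelian.Ext.mk₀ t) (zero_add 1)
    (Subsingleton.elim _ _)
  obtain ⟨l, rfl⟩ := (Abelian.Ext.mk₀_bijective F B).2 y
  refine ⟨l, (Abelian.Ext.mk₀_bijective F X).1 ?_⟩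
  rw [← hy, Abelian.Ext.mk₀_comp_mk₀]

/-- If `φ` lifts the idempotent `r ≫ i` along `p`, then the kernel of `p ≫ r` is a direct summand
of the biproduct of the kernel of `p` and the source of `p`. -/
lemma kernel_summand {K F X Y : C} {k : K ⟶ F} {p : F ⟶ X} {w : k ≫ p = 0}
    (hS : (ShortComplex.mk k p w).ShortExact) {i : Y ⟶ X} {r : X ⟶ Y} (hir : i ≫ r = 𝟙 Y)
    {φ : F ⟶ F} (hφ : φ ≫ p = p ≫ r ≫ i) :
    ∃ (a : kernel (p ≫ r) ⟶ K ⊞ F) (b : K ⊞ F ⟶ kernel (p ≫ r)), a ≫ b = 𝟙 _ := by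
  have := hS.mono_f
  dsimp at *
  have hι : kernel.ι (p ≫ r) ≫ p ≫ r = 0 := kernel.condition _
  obtain ⟨α, hα⟩ := hS.exact.lift' (kernel.ι (p ≫ r) ≫ φ) (by simp [hφ, reassoc_of% hι])
  dsimp at α hα
  refine ⟨biprod.lift α (kernel.ι _),
    biprod.desc (kernel.lift _ k (by rw [reassoc_of% w, zero_comp]))
      (kernel.lift _ (𝟙 F - φ) (by simp [reassoc_of% hφ, hir])), ?_⟩
  rw [← cancel_mono (kernel.ι (p ≫ r))]
  simp [biprod.lift_desc, hα]

lemma HasResLength.summand [HasExt.{w} C] {ω S : C → Prop} (hext : ClosedUnderExtensions ω)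
    (hiso : ClosedUnderIsos ω) (hproj : ExtVanish (fun M => ω M ∧ S M) ω)
    (hgen : RelGenerator ω S) (hsum : ClosedUnderSummands ω) {n : ℕ} {X Y : C}
    (hX : HasResLength ω n X) (i : Y ⟶ X) (r : X ⟶ Y) (hir : i ≫ r = 𝟙 Y) :
    HasResLength ω n Y := by
  induction n generalizing X Y with
  | zero =>
    cases hX with
    | of_iso hW e => exact .of_iso (hsum (hiso e.symm hW) ⟨i, r, hir⟩) (Iso.refl _)
  | succ n ih =>
    obtain ⟨K, F, hF, ⟨k, p, w, hS⟩, hK⟩ := hX.exists_generator_cover hext hiso hgen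
    have hExt := ext_vanish_resolution hiso (fun _ hW => hproj hF hW) hK 1 le_rfl
    obtain ⟨φ, hφ⟩ := exists_lift_of_ext_one hS hExt (p ≫ r ≫ i)
    obtain ⟨a, b, hab⟩ := kernel_summand hS hir hφ
    have := hS.epi_g
    dsimp at this
    have : IsSplitEpi r := ⟨⟨⟨i, hir⟩⟩⟩
    exact .step hF.1 (isSES_kernel (p ≫ r))
      (ih (hK.extension hext hiso hF.1 (isSES_biprod K F)) a b hab)

theorem stmt_4 [HasExt.{w} C] (ω S : C → Prop)
    (hext : ClosedUnderExtensions ω) (hiso : ClosedUnderIsos ω)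
    (hproj : ExtVanish (fun M => ω M ∧ S M) ω)
    (hgen : RelGenerator ω S)
    (hsum : ClosedUnderSummands ω) :
    ClosedUnderSummands (ResClass ω) := by
  rintro X Y ⟨n, hX⟩ ⟨i, r, hir⟩
  exact ⟨n, hX.summand hext hiso hproj hgen hsum i r hir⟩
end

section
/- Let C be an abelian category with Ext groups and let X, ω, S be classes of objects satisfying: (1) ω is closed under extensions and isomorphisms; (2) ω∩S is closed under direct summands and is a relative generator in ω; (3) ω∩S ⊆ X∩S; (4) X∩S is closed under cocones; (5) Ext^i(A,W)=0 for all A∈X∩S, W∈ω∩S and all i≥1. Then ω∩S = X ∩ ω^∧ ∩ S. -/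
/-!
The inclusion `ω ∩ S ⊆ 𝒳 ∩ ω^∧ ∩ S` is immediate. For the converse, induct on the length `n` of an
`ω`-resolution of `M ∈ 𝒳 ∩ S`. If `n = 0`, then `M` is isomorphic to an object of `ω`. Otherwise
there is `0 → K → W → M → 0` with `W ∈ ω` and `K` of resolution length `n - 1`. The relative
generator gives `0 → W' → F → W → 0` with `F ∈ ω ∩ S` and `W' ∈ ω`, and pulling it back along
`K → W` gives `0 → L → F → M → 0` and `0 → W' → L → K → 0` (`IsSES.exists_of_comp`).

* `L` again has an `ω`-resolution of length `n - 1`: pull `L → K` back along the first term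
  `W₀ → K` of the resolution of `K`; the pullback is an extension of `W₀` by `W'`, so it lies
  in `ω`, and it maps onto `L` with the same kernel as `W₀ → K`
  (`HasResLength.of_isSES`).
* `L ∈ 𝒳 ∩ S` because `𝒳 ∩ S` is closed under cocones and contains `F` and `M`.

By induction `L ∈ ω ∩ S`, so `Ext¹(M, L) = 0`, the sequence `0 → L → F → M → 0` splits, and `M`
is a direct summand of `F ∈ ω ∩ S`.
-/


open CategoryTheory

universe w v u

variable {C : Type u} [Category.{v} C] [Abelian C]

/-- Short exact sequences are stable under base change: in an abelian category the pullback of an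
epimorphism is an epimorphism with the same kernel. -/
lemma IsSES.of_isPullback {A B X E P : C} {f : A ⟶ B} {g : B ⟶ X} {zero : f ≫ g = 0}
    (hS : (ShortComplex.mk f g zero).ShortExact) {h : E ⟶ X} {p : P ⟶ B} {q : P ⟶ E}
    (hP : IsPullback p q g h) : IsSES A P E := by
  have : Mono f := hS.mono_f
  have : Epi g := hS.epi_g
  have hw : f ≫ g = (0 : A ⟶ E) ≫ h := by rw [zero, Limits.zero_comp]
  have hmono : Mono (hP.lift f 0 hw) :=
    mono_of_mono_fac (hP.lift_fst f 0 hw)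
  have hepi : Epi q := by
    rw [← hP.isoPullback_hom_snd]
    infer_instance
  refine ⟨hP.lift f 0 hw, q, hP.lift_snd _ _ _,
    ShortComplex.ShortExact.mk' (ShortComplex.exact_of_f_is_kernel _
      (Limits.KernelFork.IsLimit.ofι' _ _ fun {T} k (hk : k ≫ q = 0) => ?_)) hmono hepi⟩
  have hk' : (k ≫ p) ≫ g = 0 := by
    rw [Category.assoc, hP.w, ← Category.assoc k, hk, Limits.zero_comp]
  have hl : hS.exact.lift (k ≫ p) hk' ≫ f = k ≫ p := hS.exact.lift_f (k ≫ p) hk'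
  refine ⟨hS.exact.lift (k ≫ p) hk', hP.hom_ext ?_ ?_⟩
  · exact (Category.assoc _ _ _).trans ((congrArg _ (hP.lift_fst _ _ _)).trans hl)
  · exact (Category.assoc _ _ _).trans ((congrArg _ (hP.lift_snd _ _ _)).trans
      (Limits.comp_zero.trans hk.symm))

/-- The pullback of two epimorphisms `B → X ← E` is an extension of `E` by `ker (B → X)` and of `B`
by `ker (E → X)`. -/
lemma IsSES.exists_pullback {A B X K E : C} (h : IsSES A B X) (h' : IsSES K E X) :
    ∃ P : C, IsSES A P E ∧ IsSES K P B := by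
  obtain ⟨f, g, zero, hS⟩ := h
  obtain ⟨f', g', zero', hS'⟩ := h'
  have hP := IsPullback.of_hasPullback g g'
  exact ⟨_, .of_isPullback hS hP, .of_isPullback hS' hP.flip⟩

/-- The kernel of a composite of epimorphisms `F → W → M` is an extension of `ker (W → M)` by
`ker (F → W)`. -/
lemma IsSES.exists_of_comp {A F W K M : C} (h : IsSES A F W) (h' : IsSES K W M) :
    ∃ L : C, IsSES A L K ∧ IsSES L F M := by
  obtain ⟨f, g, zero, hS⟩ := h
  obtain ⟨k, m, zero', hS'⟩ := h'
  have : Epi g := hS.epi_g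
  have : Mono k := hS'.mono_f
  have : Epi m := hS'.epi_g
  have hP := IsPullback.of_hasPullback g k
  have hmono : Mono (Limits.pullback.fst g k) := inferInstance
  have hepi : Epi (g ≫ m) := inferInstance
  refine ⟨_, .of_isPullback hS hP, Limits.pullback.fst g k, g ≫ m,
    by rw [← Category.assoc, hP.w, Category.assoc, zero', Limits.comp_zero],
    ShortComplex.ShortExact.mk' (ShortComplex.exact_of_f_is_kernel _
      (Limits.KernelFork.IsLimit.ofι' _ _ fun {T} t (ht : t ≫ g ≫ m = 0) => ?_))
      hmono hepi⟩
  have ht' : (t ≫ g) ≫ m = 0 := by rw [Category.assoc, ht]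
  exact ⟨hP.lift t (hS'.exact.lift (t ≫ g) ht') (hS'.exact.lift_f (t ≫ g) ht').symm,
    hP.lift_fst _ _ _⟩

/-- An extension of an object with an `ω`-resolution of length `n` by an object of `ω` has an
`ω`-resolution of the same length. -/
lemma HasResLength.of_isSES {ω : C → Prop} (hext : ClosedUnderExtensions ω)
    (hiso : ClosedUnderIsos ω) {n : ℕ} {A L K : C} (hK : HasResLength ω n K) (hA : ω A)
    (h : IsSES A L K) : HasResLength ω n L := by
  cases hK with
  | of_iso hW e => exact .of_iso (hext h hA (hiso e.symm hW)) (Iso.refl L)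
  | step hW h' hK' =>
    obtain ⟨P, h₁, h₂⟩ := h.exists_pullback h'
    exact .step (hext h₁ hA hW) h₂ hK'

lemma IsSES.exists_splitting [HasExt.{w} C] {A B X : C} (h : IsSES A B X)
    (hExt : Subsingleton (Abelian.Ext X A 1)) :
    ∃ (i : X ⟶ B) (r : B ⟶ X), i ≫ r = 𝟙 X := by
  obtain ⟨f, g, zero, hS⟩ := h
  -- The obstruction to lifting `𝟙 X` along `g` lives in `Ext¹(X, A)`.
  obtain ⟨x, hx⟩ := Abelian.Ext.covariant_sequence_exact₃ X hS (Abelian.Ext.mk₀ (𝟙 X))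
    (zero_add 1) (hExt.elim _ _)
  obtain ⟨i, rfl⟩ := (Abelian.Ext.mk₀_bijective X B).2 x
  rw [Abelian.Ext.mk₀_comp_mk₀] at hx
  exact ⟨i, g, (Abelian.Ext.mk₀_bijective X X).1 hx⟩

theorem stmt_6 [HasExt.{w} C] (𝒳 ω S : C → Prop)
    (h1ext : ClosedUnderExtensions ω) (h1iso : ClosedUnderIsos ω)
    (h2sum : ClosedUnderSummands (fun M => ω M ∧ S M))
    (h2gen : RelGenerator ω S)
    (h3 : ∀ ⦃M : C⦄, ω M ∧ S M → 𝒳 M ∧ S M)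
    (h4 : ClosedUnderCocones (fun M => 𝒳 M ∧ S M))
    (h5 : ExtVanish (fun M => 𝒳 M ∧ S M) (fun M => ω M ∧ S M)) :
    ∀ M : C, (ω M ∧ S M) ↔ (𝒳 M ∧ ResClass ω M ∧ S M) := by
  intro M
  refine ⟨fun hM => ⟨(h3 hM).1, ⟨0, .of_iso hM.1 (Iso.refl M)⟩, hM.2⟩, ?_⟩
  rintro ⟨hX, ⟨n, hn⟩, hS⟩
  induction n generalizing M with
  | zero =>
    cases hn with
    | of_iso hW e => exact ⟨h1iso e.symm hW, hS⟩
  | succ n ih =>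
    cases hn with
    | step hW h hK =>
      obtain ⟨W', F, hW', hF, hF'⟩ := h2gen hW
      obtain ⟨L, hL, hLM⟩ := hF'.exists_of_comp h
      have hLX := h4 hLM (h3 hF) ⟨hX, hS⟩
      have hLω := ih L hLX.1 hLX.2 (hK.of_isSES h1ext h1iso hW' hL)
      exact h2sum hF (hLM.exists_splitting (h5 ⟨hX, hS⟩ hLω 1 le_rfl))
end
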